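/- arXiv:1911.10382 — 9 statements merged into one kernel-verified Lean document; each statement's English description precedes it below -/
import Mathlib

section
/- Let A be a normal real n×n matrix, i.e. A Aᵀ = Aᵀ A. Then the matrix P := −(A + Aᵀ)/2 is symmetric, satisfies trace(P) = −trace(A), and satisfies the algebraic Riccati equation 2P² + AᵀP + PA = 0; moreover, H := A + P = (A − Aᵀ)/2 satisfies trace(H) = 0 and PH + HᵀP = 0. In particular the linear vector field F(x) = A x admits a strictly orthogonal Helmholtz–Hodge decomposition A x = −P x + H x. -/
open Matrix

theorem half_aux (n : ℕ) (M : Matrix (Fin n) (Fin n) ℝ) : M / 2 = (1 / 2 : ℝ) • M := by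
  have h2 : (2 : Matrix (Fin n) (Fin n) ℝ) = (2 : ℝ) • 1 := by
    rw [two_smul, one_add_one_eq_two]
  have hinv : (2 : Matrix (Fin n) (Fin n) ℝ)⁻¹ = (1 / 2 : ℝ) • 1 := by
    apply Matrix.inv_eq_right_inv
    rw [h2, smul_mul_smul_comm]
    norm_num
  rw [div_eq_mul_inv, hinv, mul_smul_comm, mul_one]

theorem stmt_2 (n : ℕ) (A : Matrix (Fin n) (Fin n) ℝ) (hA : A * Aᵀ = Aᵀ * A) :
    (-((A + Aᵀ) / 2)).IsSymm ∧
    (-((A + Aᵀ) / 2)).trace = -A.trace ∧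
    2 * (-((A + Aᵀ) / 2)) ^ 2 + Aᵀ * (-((A + Aᵀ) / 2)) + (-((A + Aᵀ) / 2)) * A = 0 ∧
    A + (-((A + Aᵀ) / 2)) = (A - Aᵀ) / 2 ∧
    (A + (-((A + Aᵀ) / 2))).trace = 0 ∧
    (-((A + Aᵀ) / 2)) * (A + (-((A + Aᵀ) / 2)))
      + (A + (-((A + Aᵀ) / 2)))ᵀ * (-((A + Aᵀ) / 2)) = 0 ∧
    (∀ x : EuclideanSpace ℝ (Fin n),
      Matrix.toEuclideanLin A x =
        -Matrix.toEuclideanLin (-((A + Aᵀ) / 2)) x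
          + Matrix.toEuclideanLin ((A - Aᵀ) / 2) x) := by
  have hs : A + -((1 / 2 : ℝ) • (A + Aᵀ)) = (1 / 2 : ℝ) • (A - Aᵀ) := by module
  simp only [half_aux, hs]
  refine ⟨?_, ?_, ?_, trivial, ?_, ?_, ?_⟩
  · simp [Matrix.IsSymm, add_comm]
  · simp only [trace_neg, trace_smul, trace_add, trace_transpose, smul_eq_mul]
    ring
  · simp only [two_mul, pow_two, neg_mul_neg, mul_neg, neg_mul, smul_mul_smul_comm,
      smul_mul_assoc, mul_smul_comm, mul_add, add_mul, hA]
    module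
  · simp [trace_sub]
  · simp only [transpose_smul, transpose_sub, transpose_transpose, mul_neg, neg_mul,
      smul_mul_assoc, mul_smul_comm, mul_add, add_mul, mul_sub, sub_mul, hA]
    module
  · intro x
    rw [← LinearMap.neg_apply, ← LinearMap.add_apply, ← map_neg, ← map_add]
    congr 2
    module
end

section
/- Let A be a real n×n matrix and set P := −(A + Aᵀ)/2. Then P satisfies the equation 2P² + AᵀP + PA = 0 if and only if A is normal, i.e. A Aᵀ = Aᵀ A. -/
open Matrix

theorem stmt_3 (n : ℕ) (A : Matrix (Fin n) (Fin n) ℝ) :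
    2 * (-((A + Aᵀ) / 2)) ^ 2 + Aᵀ * (-((A + Aᵀ) / 2)) + (-((A + Aᵀ) / 2)) * A = 0 ↔
    A * Aᵀ = Aᵀ * A := by
  have h2 : (2 : Matrix (Fin n) (Fin n) ℝ)⁻¹ = (1 / 2 : ℝ) • 1 := by
    apply Matrix.inv_eq_right_inv
    rw [mul_smul_comm, mul_one, ← one_add_one_eq_two (R := Matrix (Fin n) (Fin n) ℝ), smul_add,
      ← add_smul]
    norm_num
  have hd : (A + Aᵀ) / 2 = (1 / 2 : ℝ) • (A + Aᵀ) := by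
    rw [div_eq_mul_inv, h2, mul_smul_comm, mul_one]
  have key : 2 * (-((A + Aᵀ) / 2)) ^ 2 + Aᵀ * (-((A + Aᵀ) / 2)) + (-((A + Aᵀ) / 2)) * A
      = (1 / 2 : ℝ) • (A * Aᵀ - Aᵀ * A) := by
    rw [hd, two_mul, pow_two]
    simp only [neg_mul, mul_neg, neg_neg, smul_mul_assoc, mul_smul_comm, add_mul, mul_add,
      smul_add, smul_sub, smul_smul]
    module
  rw [key, smul_eq_zero, sub_eq_zero]
  norm_num
end

section
/- Let h : ℝⁿ → ℝ be a harmonic function (h is smooth and its Laplacian, the sum of its second partial derivatives, vanishes identically) such that |h(x) − h(0)| ≤ C‖x‖ᵏ for all x ∈ ℝⁿ, where C > 0 is a constant and k is a positive integer. Then h is a polynomial of total degree at most k, i.e. there exists a multivariate polynomial p in n variables with real coefficients and total degree at most k such that h(x) = p(x) for all x. -/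
open MeasureTheory Metric Filter Topology

noncomputable def pd {n : ℕ} (i : Fin n) (u : EuclideanSpace ℝ (Fin n) → ℝ) :
    EuclideanSpace ℝ (Fin n) → ℝ :=
  fun x => fderiv ℝ u x (EuclideanSpace.single i 1)

theorem pd_contDiff {n : ℕ} (i : Fin n) {u : EuclideanSpace ℝ (Fin n) → ℝ}
    (hu : ContDiff ℝ (⊤ : ℕ∞) u) : ContDiff ℝ (⊤ : ℕ∞) (pd i u) := by
  have : ContDiff ℝ (⊤ : ℕ∞) (fderiv ℝ u) := hu.fderiv_right (by simp)
  exact this.clm_apply contDiff_const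

theorem pd_comm {n : ℕ} (i j : Fin n) {u : EuclideanSpace ℝ (Fin n) → ℝ}
    (hu : ContDiff ℝ (⊤ : ℕ∞) u) : pd i (pd j u) = pd j (pd i u) := by
  funext x
  have h1 : ContDiff ℝ (⊤ : ℕ∞) (fderiv ℝ u) := hu.fderiv_right (by simp)
  have h2 : DifferentiableAt ℝ (fderiv ℝ u) x := (h1.differentiable (by simp)) x
  have key : ∀ a b : Fin n, pd a (pd b u) x =
      fderiv ℝ (fderiv ℝ u) x (EuclideanSpace.single a 1) (EuclideanSpace.single b 1) := by
    intro a b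
    unfold pd
    rw [fderiv_clm_apply h2 (differentiableAt_const _)]
    simp
  rw [key, key]
  exact second_derivative_symmetric (fun y => ((hu.differentiable (by simp)) y).hasFDerivAt)
    h2.hasFDerivAt _ _

theorem pd_harm {n : ℕ} (j : Fin n) {u : EuclideanSpace ℝ (Fin n) → ℝ}
    (hu : ContDiff ℝ (⊤ : ℕ∞) u) (hh : ∀ x, ∑ i, pd i (pd i u) x = 0) :
    ∀ x, ∑ i, pd i (pd i (pd j u)) x = 0 := by
  intro x
  have h1 : ∀ i, pd i (pd i (pd j u)) = pd j (pd i (pd i u)) := by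
    intro i
    rw [pd_comm i j hu, pd_comm i j (pd_contDiff i hu)]
  have h2 : (fun y => ∑ i, pd i (pd i u) y) = fun _ => 0 := funext hh
  have h3 : pd j (fun y => ∑ i, pd i (pd i u) y) x = ∑ i, pd j (pd i (pd i u)) x := by
    unfold pd
    rw [fderiv_fun_sum]
    · simp
    · intro i _
      exact ((pd_contDiff i (pd_contDiff i hu)).differentiable (by simp)) x
  simp_rw [h1]
  rw [← h3, h2]
  simp [pd]

theorem pd_mul {n : ℕ} (i : Fin n) {u v : EuclideanSpace ℝ (Fin n) → ℝ}
    (hu : ContDiff ℝ (⊤ : ℕ∞) u) (hv : ContDiff ℝ (⊤ : ℕ∞) v) (x) :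
    pd i (fun y => u y * v y) x = u x * pd i v x + pd i u x * v x := by
  unfold pd
  rw [fderiv_fun_mul (hu.differentiable (by simp) x) (hv.differentiable (by simp) x)]
  simp [mul_comm]

theorem pd_supp {n : ℕ} (i : Fin n) {u : EuclideanSpace ℝ (Fin n) → ℝ}
    (hc : HasCompactSupport u) : HasCompactSupport (pd i u) := by
  exact (hc.fderiv (𝕜 := ℝ)).comp_left (g := fun L => L (EuclideanSpace.single i 1)) (by simp)

theorem int_pd {n : ℕ} (i : Fin n) {u : EuclideanSpace ℝ (Fin n) → ℝ}
    (hu : ContDiff ℝ (⊤ : ℕ∞) u) (hc : HasCompactSupport u) : ∫ x, pd i u x = 0 := by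
  have h1 : Integrable (pd i u) :=
    (pd_contDiff i hu).continuous.integrable_of_hasCompactSupport (pd_supp i hc)
  have h2 : Integrable u := hu.continuous.integrable_of_hasCompactSupport hc
  have := integral_mul_fderiv_eq_neg_fderiv_mul_of_integrable (μ := volume)
    (f := fun _ : EuclideanSpace ℝ (Fin n) => (1:ℝ)) (g := u) (v := EuclideanSpace.single i 1)
    (by simp) (by simpa using! h1) (by simpa using h2)
    (by intros; fun_prop) (fun x _ => hu.differentiable (by simp) x)
  simpa [pd] using this

theorem cacc {n : ℕ} {u η : EuclideanSpace ℝ (Fin n) → ℝ}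
    (hu : ContDiff ℝ (⊤ : ℕ∞) u) (hh : ∀ x, ∑ i, pd i (pd i u) x = 0)
    (hη : ContDiff ℝ (⊤ : ℕ∞) η) (hc : HasCompactSupport η) :
    ∫ x, η x ^ 2 * ∑ i, pd i u x ^ 2 ≤ ∫ x, 4 * (u x ^ 2 * ∑ i, pd i η x ^ 2) := by
  have hF : ∀ i, ContDiff ℝ (⊤ : ℕ∞) (fun x => (u x * (η x * η x)) * pd i u x) := fun i =>
    (hu.mul (hη.mul hη)).mul (pd_contDiff i hu)
  have hFc : ∀ i, HasCompactSupport (fun x => (u x * (η x * η x)) * pd i u x) := fun i => by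
    have : HasCompactSupport (fun x => (u x * (η x * η x))) := (hc.mul_left (f := η)).mul_left (f := u)
    exact this.mul_right (f' := pd i u)
  have hFi : ∀ i, Integrable (pd i (fun x => (u x * (η x * η x)) * pd i u x)) := fun i =>
    (pd_contDiff i (hF i)).continuous.integrable_of_hasCompactSupport (pd_supp i (hFc i))
  have h0 : ∫ x, ∑ i, pd i (fun x => (u x * (η x * η x)) * pd i u x) x = 0 := by
    rw [integral_finsetSum _ (fun i _ => hFi i)]
    exact Finset.sum_eq_zero fun i _ => int_pd i (hF i) (hFc i)
  have hpt : ∀ i x, pd i (fun x => (u x * (η x * η x)) * pd i u x) x =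
      u x * η x ^ 2 * pd i (pd i u) x + η x ^ 2 * pd i u x ^ 2 
        + 2 * u x * η x * pd i η x * pd i u x := by
    intro i x
    rw [pd_mul i (hu.mul (hη.mul hη)) (pd_contDiff i hu), pd_mul i hu (hη.mul hη), pd_mul i hη hη]
    ring
  have hcu : Continuous u := hu.continuous
  have hcη : Continuous η := hη.continuous
  have hcp : ∀ i, Continuous (pd i u) := fun i => (pd_contDiff i hu).continuous
  have hcq : ∀ i, Continuous (pd i η) := fun i => (pd_contDiff i hη).continuous
  have I1 : Integrable (fun x => η x ^ 2 * ∑ i, pd i u x ^ 2) := by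
    apply Continuous.integrable_of_hasCompactSupport (by fun_prop)
    have : HasCompactSupport (fun x => η x ^ 2) := hc.comp_left (g := fun t => t^2) (by simp)
    exact this.mul_right
  have I2 : Integrable (fun x => 4 * (u x ^ 2 * ∑ i, pd i η x ^ 2)) := by
    apply Continuous.integrable_of_hasCompactSupport (by fun_prop)
    have : HasCompactSupport (fun x => ∑ i, pd i η x ^ 2) := by
      apply HasCompactSupport.comp_left (f := fderiv ℝ η) (hc.fderiv (𝕜 := ℝ))
        (g := fun L => ∑ i, (L (EuclideanSpace.single i 1)) ^ 2)
      simp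
    exact (this.mul_left (f := fun x => u x ^ 2)).mul_left (f := fun x => (4:ℝ))
  have I3 : Integrable (fun x => ∑ i, pd i (fun x => (u x * (η x * η x)) * pd i u x) x) :=
    integrable_finsetSum _ fun i _ => hFi i
  have hle : ∫ x, η x ^ 2 * ∑ i, pd i u x ^ 2 ≤ 
      ∫ x, (2 * (∑ i, pd i (fun x => (u x * (η x * η x)) * pd i u x) x) +
        4 * (u x ^ 2 * ∑ i, pd i η x ^ 2)) := by
    apply integral_mono I1 ((I3.const_mul 2).add I2)
    intro x
    simp only [hpt, Pi.add_apply, Finset.sum_add_distrib, ← Finset.mul_sum, hh, mul_zero, zero_add]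
    have : ∑ i, 0 ≤ ∑ i, (η x * pd i u x + 2 * u x * pd i η x) ^ 2 := 
      Finset.sum_le_sum fun i _ => sq_nonneg _
    have e : ∑ i, (η x * pd i u x + 2 * u x * pd i η x) ^ 2 = η x ^ 2 * ∑ i, pd i u x ^ 2 
       + 2 * (∑ i, 2 * u x * η x * pd i η x * pd i u x) + 4 * (u x ^ 2 * ∑ i, pd i η x ^ 2) := by
      simp only [Finset.mul_sum, ← Finset.sum_add_distrib]
      exact Finset.sum_congr rfl fun i _ => by ring
    rw [e] at this
    simp only [Finset.sum_const_zero] at this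
    linarith
  rw [integral_add (I3.const_mul 2) I2, integral_const_mul, h0] at hle
  linarith

theorem step {n : ℕ} (N : ℕ) {u : EuclideanSpace ℝ (Fin n) → ℝ}
    (hu : ContDiff ℝ (⊤ : ℕ∞) u) (hh : ∀ x, ∑ i, pd i (pd i u) x = 0) (m : ℕ)
    (H : ∃ C : ℝ, ∀ R : ℝ, 1 ≤ R → R ^ (2 * m) * ∫ x in ball 0 R, u x ^ 2 ≤ C * R ^ N) (j : Fin n) :
    ∃ C : ℝ, ∀ R : ℝ, 1 ≤ R → R ^ (2 * (m + 1)) * ∫ x in ball 0 R, pd j u x ^ 2 ≤ C * R ^ N := by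
  obtain ⟨C, hC⟩ := H
  let φ : ContDiffBump (0 : EuclideanSpace ℝ (Fin n)) := ⟨1, 2, by norm_num, by norm_num⟩
  have hφ : ContDiff ℝ (⊤ : ℕ∞) φ := φ.contDiff
  have hφc : HasCompactSupport φ := φ.hasCompactSupport
  have hS : HasCompactSupport (fun x => ∑ i, pd i φ x ^ 2) := by
    apply HasCompactSupport.comp_left (f := fderiv ℝ φ) (hφc.fderiv (𝕜 := ℝ))
        (g := fun L => ∑ i, (L (EuclideanSpace.single i 1)) ^ 2)
    simp
  have hSc : Continuous (fun x => ∑ i, pd i φ x ^ 2) :=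
    continuous_finsetSum _ fun i _ => (pd_contDiff i hφ).continuous.pow 2
  obtain ⟨M, hM⟩ := hS.exists_bound_of_continuous hSc
  have hM0 : 0 ≤ M := (norm_nonneg _).trans (hM 0)
  refine ⟨4 * M * C * 2 ^ N, fun R hR => ?_⟩
  have hR0 : 0 < R := by linarith
  let η : EuclideanSpace ℝ (Fin n) → ℝ := fun x => φ (R⁻¹ • x)
  have hη : ContDiff ℝ (⊤ : ℕ∞) η := hφ.comp (contDiff_const_smul _)
  have hηc : HasCompactSupport η :=
    hφc.comp_homeomorph (Homeomorph.smulOfNeZero R⁻¹ (inv_ne_zero hR0.ne'))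
  have hpd : ∀ i x, pd i η x = R⁻¹ * pd i φ (R⁻¹ • x) := by
    intro i x
    have : HasFDerivAt η ((fderiv ℝ φ (R⁻¹ • x)).comp
        (R⁻¹ • ContinuousLinearMap.id ℝ (EuclideanSpace ℝ (Fin n)))) x :=
      HasFDerivAt.comp (g := φ) (f := fun y => R⁻¹ • y) x ((hφ.differentiable (by simp)) _).hasFDerivAt
        ((hasFDerivAt_id x).const_smul R⁻¹)
    unfold pd
    rw [this.fderiv]
    simp
  have hball : ∀ x ∉ ball (0 : EuclideanSpace ℝ (Fin n)) (2 * R), ∀ i, pd i η x = 0 := by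
    intro x hx i
    have hz : ∀ y ∉ ball (0 : EuclideanSpace ℝ (Fin n)) (2 * R), η y = 0 := by
      intro y hy
      apply φ.zero_of_le_dist
      simp only [mem_ball, dist_zero_right, not_lt] at hy
      simp only [φ, dist_zero_right, norm_smul, norm_inv, Real.norm_eq_abs, abs_of_pos hR0]
      rw [le_inv_mul_iff₀ hR0]; linarith
    have hmin : IsLocalMin η x := by
      refine Filter.Eventually.of_forall fun y => ?_
      rw [hz x hx]
      exact φ.nonneg
    simp [pd, hmin.fderiv_eq_zero]
  have hcu : Continuous u := hu.continuous
  have hcη : Continuous η := hη.continuous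
  have hcp : ∀ i, Continuous (pd i u) := fun i => (pd_contDiff i hu).continuous
  have key := cacc hu hh hη hηc
  have L : ∫ x in ball 0 R, pd j u x ^ 2 ≤ ∫ x, η x ^ 2 * ∑ i, pd i u x ^ 2 := by
    rw [← integral_indicator measurableSet_ball]
    have I1 : Integrable (fun x => η x ^ 2 * ∑ i, pd i u x ^ 2) := by
      apply Continuous.integrable_of_hasCompactSupport (by fun_prop)
      have : HasCompactSupport (fun x => η x ^ 2) := hηc.comp_left (g := fun t => t^2) (by simp)
      exact this.mul_right
    apply integral_mono_of_nonneg _ I1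
    · refine Filter.Eventually.of_forall fun x => ?_
      by_cases hx : x ∈ ball (0 : EuclideanSpace ℝ (Fin n)) R
      · have h1 : η x = 1 := by
          apply φ.one_of_mem_closedBall
          simp only [mem_ball, dist_zero_right] at hx
          simp only [φ, mem_closedBall, dist_zero_right, norm_smul, norm_inv, Real.norm_eq_abs,
            abs_of_pos hR0]
          rw [inv_mul_le_iff₀ hR0]; linarith
        simp only [Set.indicator_of_mem hx, h1, one_pow, one_mul]
        exact Finset.single_le_sum (f := fun i => pd i u x ^ 2) (fun i _ => sq_nonneg _)
          (Finset.mem_univ j)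
      · simp only [Set.indicator_of_notMem hx]
        positivity
    · refine Filter.Eventually.of_forall fun x => ?_
      exact Set.indicator_nonneg (fun _ _ => sq_nonneg _) x
  have U : ∫ x, 4 * (u x ^ 2 * ∑ i, pd i η x ^ 2) ≤
      (4 * M * (R⁻¹) ^ 2) * ∫ x in ball 0 (2 * R), u x ^ 2 := by
    rw [← integral_const_mul, ← integral_indicator measurableSet_ball]
    apply integral_mono_of_nonneg
    · exact Filter.Eventually.of_forall fun x => by simp only [Pi.zero_apply]; positivity
    · rw [integrable_indicator_iff measurableSet_ball]
      have : Continuous (fun x => (4 * M * (R⁻¹) ^ 2) * u x ^ 2) := by fun_prop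
      exact (this.continuousOn.integrableOn_compact (isCompact_closedBall 0 (2*R))).mono_set
        ball_subset_closedBall
    · refine Filter.Eventually.of_forall fun x => ?_
      by_cases hx : x ∈ ball (0 : EuclideanSpace ℝ (Fin n)) (2 * R)
      · simp only [Set.indicator_of_mem hx, hpd, mul_pow, ← Finset.mul_sum]
        have := (Real.le_norm_self _).trans (hM (R⁻¹ • x))
        have h2 : 0 ≤ 4 * (R⁻¹) ^ 2 * u x ^ 2 := by positivity
        have := mul_le_mul_of_nonneg_left this h2
        nlinarith
      · simp [Set.indicator_of_notMem hx, hball x hx]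
  have hfin := (L.trans key).trans U
  have h2R := hC (2 * R) (by linarith)
  have hI : 0 ≤ ∫ x in ball 0 (2 * R), u x ^ 2 := integral_nonneg fun x => sq_nonneg _
  calc R ^ (2 * (m + 1)) * ∫ x in ball 0 R, pd j u x ^ 2 
      ≤ R ^ (2 * (m + 1)) * ((4 * M * (R⁻¹) ^ 2) * ∫ x in ball 0 (2 * R), u x ^ 2) := by gcongr
    _ = 4 * M * (R ^ (2 * m) * ∫ x in ball 0 (2 * R), u x ^ 2) := by
        field_simp
        ring
    _ ≤ 4 * M * ((2 * R) ^ (2 * m) * ∫ x in ball 0 (2 * R), u x ^ 2) := by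
        gcongr
        linarith
    _ ≤ 4 * M * (C * (2 * R) ^ N) := by gcongr
    _ = _ := by ring

theorem vanish {n : ℕ} (N : ℕ) (hN : 0 < N) {u : EuclideanSpace ℝ (Fin n) → ℝ}
    (hu : Continuous u)
    (H : ∃ C : ℝ, ∀ R : ℝ, 1 ≤ R → R ^ (2 * N) * ∫ x in ball 0 R, u x ^ 2 ≤ C * R ^ N) :
    ∀ x, u x = 0 := by
  obtain ⟨C, hC⟩ := H
  have hint : ∀ R : ℝ, IntegrableOn (fun x => u x ^ 2) (ball 0 R) := fun R =>
    ((hu.pow 2).continuousOn.integrableOn_compact (isCompact_closedBall 0 R)).mono_set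
        ball_subset_closedBall
  have h1 : ∀ R : ℝ, 1 ≤ R → R * ∫ x in ball 0 R, u x ^ 2 ≤ C := by
    intro R hR
    have hI : 0 ≤ ∫ x in ball 0 R, u x ^ 2 := integral_nonneg fun x => sq_nonneg _
    have h2 := hC R hR
    have hp : 0 < R ^ N := by positivity
    have h3 : R ^ N * ∫ x in ball 0 R, u x ^ 2 ≤ C := by
      rw [two_mul, pow_add] at h2
      by_contra! hlt
      nlinarith
    refine le_trans ?_ h3
    gcongr
    exact le_self_pow₀ hR hN.ne'
  have h2 : ∀ r : ℝ, ∫ x in ball 0 r, u x ^ 2 = 0 := by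
    intro r
    have hI : 0 ≤ ∫ x in ball 0 r, u x ^ 2 := integral_nonneg fun x => sq_nonneg _
    by_contra hne
    have hpos : 0 < ∫ x in ball 0 r, u x ^ 2 := lt_of_le_of_ne hI (Ne.symm hne)
    set I := ∫ x in ball 0 r, u x ^ 2
    set R := max (max 1 r) ((C + 1) / I)
    have hR1 : 1 ≤ R := (le_max_left _ _).trans (le_max_left _ _)
    have hRr : r ≤ R := (le_max_right _ _).trans (le_max_left _ _)
    have hRC : (C + 1) / I ≤ R := le_max_right _ _
    have := h1 R hR1
    have hmono : I ≤ ∫ x in ball 0 R, u x ^ 2 :=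
      setIntegral_mono_set (hint R) (Filter.Eventually.of_forall fun x => sq_nonneg _)
        (ball_subset_ball hRr).eventuallyLE
    rw [div_le_iff₀ hpos] at hRC
    have : R * I ≤ R * ∫ x in ball 0 R, u x ^ 2 := by gcongr
    linarith
  intro x
  by_contra hx
  have hz := (setIntegral_eq_zero_iff_of_nonneg_ae
    (Filter.Eventually.of_forall fun x => sq_nonneg (u x)) (hint (‖x‖ + 1))).1 (h2 (‖x‖ + 1))
  have hopen : IsOpen (ball (0 : EuclideanSpace ℝ (Fin n)) (‖x‖ + 1) ∩ {y | u y ≠ 0}) :=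
    isOpen_ball.inter (isOpen_ne_fun hu continuous_const)
  have hmeas := hopen.measure_pos volume ⟨x, by simp, hx⟩
  rw [Filter.EventuallyEq, ae_restrict_iff' measurableSet_ball] at hz
  apply hmeas.ne'
  rw [← compl_mem_ae_iff]
  filter_upwards [hz] with y hy
  simp only [Set.mem_compl_iff, Set.mem_inter_iff, not_and, Set.mem_ofPred_eq, not_not]
  intro h
  simpa using hy h

theorem growth_start {n : ℕ} (k : ℕ) {u : EuclideanSpace ℝ (Fin n) → ℝ} (C : ℝ)
    (hC : 0 < C) (hb : ∀ x, |u x| ≤ C * ‖x‖ ^ k) :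
    ∃ C : ℝ, ∀ R : ℝ, 1 ≤ R → 
      R ^ (2 * 0) * ∫ x in ball 0 R, u x ^ 2 ≤ C * R ^ (2 * k + n) := by
  refine ⟨C ^ 2 * volume.real (ball (0 : EuclideanSpace ℝ (Fin n)) 1), fun R hR => ?_⟩
  have hR0 : 0 < R := by linarith
  have h1 : ‖∫ x in ball 0 R, u x ^ 2‖ ≤ 
      (C ^ 2 * R ^ (2 * k)) * volume.real (ball (0 : EuclideanSpace ℝ (Fin n)) R) := by
    apply norm_setIntegral_le_of_norm_le_const measure_ball_lt_top
    intro x hx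
    simp only [mem_ball, dist_zero_right] at hx
    have h2 : |u x| ≤ C * R ^ k := (hb x).trans (by gcongr)
    calc ‖u x ^ 2‖ = |u x| ^ 2 := by simp
      _ ≤ (C * R ^ k) ^ 2 := by gcongr
      _ = _ := by ring
  have h3 : volume.real (ball (0 : EuclideanSpace ℝ (Fin n)) R) =
      R ^ n * volume.real (ball (0 : EuclideanSpace ℝ (Fin n)) 1) := by
    unfold Measure.real
    rw [Measure.addHaar_ball_of_pos _ _ hR0, ENNReal.toReal_mul, ENNReal.toReal_ofReal (by positivity)]
    simp
  rw [h3] at h1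
  simp only [mul_zero, pow_zero, one_mul]
  refine (Real.le_norm_self _).trans (h1.trans (le_of_eq ?_))
  ring

theorem eval_hom {n : ℕ} {p : MvPolynomial (Fin n) ℝ} {d : ℕ} (hp : p.IsHomogeneous d)
    (t : ℝ) (x : Fin n → ℝ) :
    MvPolynomial.eval (fun i => t * x i) p = t ^ d * MvPolynomial.eval x p := by
  rw [MvPolynomial.eval_eq', MvPolynomial.eval_eq', Finset.mul_sum]
  refine Finset.sum_congr rfl fun a ha => ?_
  have : ∑ i, a i = d := by
    rw [hp.degree_eq_sum_deg_support ha]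
    exact (Finset.sum_subset (Finset.subset_univ _) (by simp)).symm
  simp only [mul_pow, Finset.prod_mul_distrib, Finset.prod_pow_eq_pow_sum, this]
  ring

theorem eval_scale {n : ℕ} (p : MvPolynomial (Fin n) ℝ) (t : ℝ) (x : Fin n → ℝ) :
    MvPolynomial.eval (fun i => t * x i) p = ∑ d ∈ Finset.range (p.totalDegree + 1),
      t ^ d * MvPolynomial.eval x (MvPolynomial.homogeneousComponent d p) := by
  conv_lhs => rw [← MvPolynomial.sum_homogeneousComponent p]
  rw [map_sum]
  exact Finset.sum_congr rfl fun d _ =>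
    eval_hom (MvPolynomial.homogeneousComponent_isHomogeneous d p) t x

noncomputable def antiP {n : ℕ} (p : MvPolynomial (Fin n) ℝ) : MvPolynomial (Fin n) ℝ :=
  ∑ d ∈ Finset.range (p.totalDegree + 1),
    MvPolynomial.C ((d + 1 : ℝ)⁻¹) * MvPolynomial.homogeneousComponent d p

theorem antiP_deriv {n : ℕ} (p : MvPolynomial (Fin n) ℝ) (x : Fin n → ℝ) (t : ℝ) :
    HasDerivAt (fun t : ℝ => t * MvPolynomial.eval (fun i => t * x i) (antiP p))
      (MvPolynomial.eval (fun i => t * x i) p) t := by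
  have h : (fun t : ℝ => t * MvPolynomial.eval (fun i => t * x i) (antiP p)) =
      fun t : ℝ => ∑ d ∈ Finset.range (p.totalDegree + 1), 
        t ^ (d + 1) * ((d + 1 : ℝ)⁻¹ * 
          MvPolynomial.eval x (MvPolynomial.homogeneousComponent d p)) := by
    funext t
    simp only [antiP, map_sum, map_mul, MvPolynomial.eval_C, Finset.mul_sum]
    refine Finset.sum_congr rfl fun d _ => ?_
    rw [eval_hom (MvPolynomial.homogeneousComponent_isHomogeneous d p) t x]
    ring
  rw [h, eval_scale]
  apply HasDerivAt.fun_sum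
  intro d _
  have := (hasDerivAt_pow (d + 1) t).mul_const ((d + 1 : ℝ)⁻¹ * 
          MvPolynomial.eval x (MvPolynomial.homogeneousComponent d p))
  refine this.congr_deriv ?_
  push_cast
  have : (d + 1 : ℝ) ≠ 0 := by positivity
  field_simp

theorem poly_of_pd {n : ℕ} {u : EuclideanSpace ℝ (Fin n) → ℝ} (hu : ContDiff ℝ (⊤ : ℕ∞) u)
    (H : ∀ i, ∃ p : MvPolynomial (Fin n) ℝ, ∀ x, pd i u x = MvPolynomial.eval (fun i => x i) p) :
    ∃ p : MvPolynomial (Fin n) ℝ, ∀ x, u x = MvPolynomial.eval (fun i => x i) p := by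
  choose P hP using H
  refine ⟨MvPolynomial.C (u 0) + ∑ i, MvPolynomial.X i * antiP (P i), fun x => ?_⟩
  let f : ℝ → ℝ := fun t => u (t • x) -
    ∑ i, x i * (t * MvPolynomial.eval (fun l => t * x l) (antiP (P i)))
  have hf : ∀ t, HasDerivAt f 0 t := by
    intro t
    have h1 : HasDerivAt (fun t : ℝ => u (t • x)) (fderiv ℝ u (t • x) x) t := by
      have h2 : HasDerivAt (fun t : ℝ => t • x) x t := by
        simpa using (hasDerivAt_id t).smul_const x
      exact ((hu.differentiable (by simp)) (t • x)).hasFDerivAt.comp_hasDerivAt t h2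
    have h3 : fderiv ℝ u (t • x) x = ∑ i, x i * MvPolynomial.eval (fun l => t * x l) (P i) := by
      have hx : x = ∑ i, x i • EuclideanSpace.single i (1:ℝ) := by
        ext l
        simp [Pi.single_apply]
      conv_lhs => rw [hx]
      rw [map_sum]
      refine Finset.sum_congr rfl fun i _ => ?_
      have := hP i (t • x)
      simp only [pd, PiLp.smul_apply, smul_eq_mul] at this
      rw [map_smul, ← hx, this, smul_eq_mul]
    have h4 : HasDerivAt (fun t : ℝ => 
      ∑ i, x i * (t * MvPolynomial.eval (fun l => t * x l) (antiP (P i))))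
      (∑ i, x i * MvPolynomial.eval (fun l => t * x l) (P i)) t := by
      apply HasDerivAt.fun_sum
      intro i _
      exact (antiP_deriv (P i) _ t).const_mul _
    have := h1.sub h4
    rw [h3, sub_self] at this
    exact this
  have hc : f 1 = f 0 := is_const_of_deriv_eq_zero (fun t => (hf t).differentiableAt)
    (fun t => (hf t).deriv) 1 0
  simp only [f, one_smul, one_mul, zero_smul, zero_mul, mul_zero, Finset.sum_const_zero,
    sub_zero] at hc
  simp only [map_add, map_sum, map_mul, MvPolynomial.eval_C, MvPolynomial.eval_X]
  linarith

theorem poly_all {n : ℕ} (N : ℕ) (hN : 0 < N) (r : ℕ) : ∀ (m : ℕ) (_ : m + r = N)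
    (u : EuclideanSpace ℝ (Fin n) → ℝ)
    (_ : ContDiff ℝ (⊤ : ℕ∞) u) (_ : ∀ x, ∑ i, pd i (pd i u) x = 0)
    (_ : ∃ C : ℝ, ∀ R : ℝ, 1 ≤ R → R ^ (2 * m) * ∫ x in ball 0 R, u x ^ 2 ≤ C * R ^ N),
    ∃ p : MvPolynomial (Fin n) ℝ, ∀ x, u x = MvPolynomial.eval (fun i => x i) p := by
  induction r with
  | zero =>
    intro m hm u hu hh H
    obtain rfl : m = N := by omega
    exact ⟨0, fun x => by simp [vanish m hN hu.continuous H x]⟩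
  | succ r ih =>
    intro m hm u hu hh H
    exact poly_of_pd hu fun i => ih (m + 1) (by omega) (pd i u) (pd_contDiff i hu)
      (pd_harm i hu hh) (step N hu hh m H i)

theorem deg_bound {n : ℕ} (p : MvPolynomial (Fin n) ℝ) (k : ℕ) (C : ℝ)
    (hb : ∀ x : EuclideanSpace ℝ (Fin n), |MvPolynomial.eval (fun i => x i) p| ≤ C * ‖x‖ ^ k) :
    p.totalDegree ≤ k := by
  have key : ∀ d, k < d → MvPolynomial.homogeneousComponent d p = 0 := by
    intro d hd
    by_cases hdp : p.totalDegree < d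
    · exact MvPolynomial.homogeneousComponent_eq_zero _ _ hdp
    apply MvPolynomial.funext
    intro x
    let G : Polynomial ℝ := ∑ d ∈ Finset.range (p.totalDegree + 1),
      Polynomial.C (MvPolynomial.eval x (MvPolynomial.homogeneousComponent d p)) * Polynomial.X ^ d
    have hG : ∀ t, G.eval t = MvPolynomial.eval (fun i => t * x i) p := by
      intro t
      rw [eval_scale]
      simp only [G, Polynomial.eval_finsetSum, Polynomial.eval_mul, Polynomial.eval_C,
        Polynomial.eval_pow, Polynomial.eval_X]
      exact Finset.sum_congr rfl fun _ _ => mul_comm _ _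
    have hGd : G.coeff d = MvPolynomial.eval x (MvPolynomial.homogeneousComponent d p) := by
      simp only [G, Polynomial.finsetSum_coeff, Polynomial.coeff_C_mul_X_pow]
      rw [Finset.sum_ite_eq, if_pos]
      simp; omega
    rw [← hGd, map_zero]
    apply Polynomial.coeff_eq_zero_of_degree_lt
    refine lt_of_le_of_lt ?_ (Nat.cast_lt.2 hd)
    by_contra! hlt
    have hlt' : (Polynomial.X ^ k : Polynomial ℝ).degree < G.degree := by
      rwa [Polynomial.degree_X_pow]
    have ht := Polynomial.abs_div_tendsto_atTop_atTop_of_degree_gt G (Polynomial.X ^ k) hlt'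
      (by simp)
    set A := C * ‖(WithLp.toLp 2 x : EuclideanSpace ℝ (Fin n))‖ ^ k
    obtain ⟨t, ht1, ht2⟩ := ((ht.eventually_gt_atTop A).and (eventually_gt_atTop 0)).exists
    have h1 := hb (t • WithLp.toLp 2 x)
    have h2 : (fun i => (t • WithLp.toLp 2 x : EuclideanSpace ℝ (Fin n)) i) = fun i => t * x i := by
      funext i; simp
    rw [h2, ← hG, norm_smul, Real.norm_eq_abs, abs_of_pos ht2, mul_pow] at h1
    simp only [Polynomial.eval_pow, Polynomial.eval_X, abs_div, abs_pow, abs_of_pos ht2] at ht1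
    rw [lt_div_iff₀ (by positivity)] at ht1
    simp only [A] at ht1
    linarith
  rw [← MvPolynomial.sum_homogeneousComponent p]
  refine MvPolynomial.totalDegree_finsetSum_le fun d _ => ?_
  by_cases hd : k < d
  · simp [key d hd]
  · exact (MvPolynomial.homogeneousComponent_isHomogeneous d p).totalDegree_le.trans (by omega)

theorem stmt_4 (n : ℕ) (h : EuclideanSpace ℝ (Fin n) → ℝ)
    (hsmooth : ContDiff ℝ (⊤ : ℕ∞) h)
    (hharm : ∀ x : EuclideanSpace ℝ (Fin n),
      ∑ i : Fin n, fderiv ℝ (fun y => fderiv ℝ h y (EuclideanSpace.single i 1)) x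
        (EuclideanSpace.single i 1) = 0)
    (C : ℝ) (hC : 0 < C) (k : ℕ) (hk : 0 < k)
    (hbound : ∀ x : EuclideanSpace ℝ (Fin n), |h x - h 0| ≤ C * ‖x‖ ^ k) :
    ∃ p : MvPolynomial (Fin n) ℝ, p.totalDegree ≤ k ∧
      ∀ x : EuclideanSpace ℝ (Fin n), h x = MvPolynomial.eval (fun i => x i) p := by
  have hu : ContDiff ℝ (⊤ : ℕ∞) (fun x => h x - h 0) := hsmooth.sub contDiff_const
  have hpd : ∀ i, pd i (fun x => h x - h 0) = pd i h := by
    intro i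
    funext x
    unfold pd
    rw [fderiv_sub_const]
  have hh : ∀ x, ∑ i, pd i (pd i (fun x => h x - h 0)) x = 0 := by
    intro x
    simp only [hpd]
    exact hharm x
  obtain ⟨p, hp⟩ := poly_all (2 * k + n) (by omega) (2 * k + n) 0 (by omega) _ hu hh
    (growth_start k C hC hbound)
  have hd := deg_bound p k C (fun x => by rw [← hp]; exact hbound x)
  refine ⟨p + MvPolynomial.C (h 0), ?_, fun x => ?_⟩
  · refine (MvPolynomial.totalDegree_add _ _).trans ?_
    simp [hd]
  · have := hp x
    simp only [map_add, MvPolynomial.eval_C, ← this]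
    ring
end

section
/- Let A = [[a, b], [c, d]] be a real 2×2 matrix with a + d ≠ 0 and b − c ≠ 0. Define α = ((a+d)/((a+d)² + (b−c)²))·(a(a+d) − c(b−c)) and β = ((a+d)/((a+d)² + (b−c)²))·(c(a+d) + a(b−c)), and set P := −[[α, β], [β, a + d − α]]. Then P is symmetric, trace(P) = −trace(A), and P satisfies the algebraic Riccati equation 2P² + AᵀP + PA = 0; hence A = −P + H with H := A + P is a strictly orthogonal HHD of matrices. -/
open Matrix

theorem stmt_9 (a b c d : ℝ) (htr : a + d ≠ 0) (hbc : b - c ≠ 0)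
    (A P : Matrix (Fin 2) (Fin 2) ℝ)
    (hA : A = !![a, b; c, d])
    (α β : ℝ)
    (hα : α = (a + d) / ((a + d) ^ 2 + (b - c) ^ 2) * (a * (a + d) - c * (b - c)))
    (hβ : β = (a + d) / ((a + d) ^ 2 + (b - c) ^ 2) * (c * (a + d) + a * (b - c)))
    (hP : P = -!![α, β; β, a + d - α]) :
    P.IsSymm ∧ P.trace = -A.trace ∧
    2 * P ^ 2 + Aᵀ * P + P * A = 0 ∧
    A = -P + (A + P) ∧ (A + P).trace = 0 ∧
    P * (A + P) + (A + P)ᵀ * P = 0 := by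
  have hD : (a + d) ^ 2 + (b - c) ^ 2 ≠ 0 := by positivity
  have e1 : (a + d) * β = c * (a + d) + α * (b - c) := by
    rw [hα, hβ]; field_simp; ring
  have e2 : (a + d) * α = a * (a + d) - (b - c) * β := by
    rw [hα, hβ]; field_simp; ring
  have e3 : α ^ 2 + β ^ 2 = a * α + c * β := by
    rw [hα, hβ]; field_simp; ring
  clear hα hβ
  have hsym : P.IsSymm := by
    rw [hP]; ext i j; fin_cases i <;> fin_cases j <;> simp
  have htrace : P.trace = -A.trace := by
    rw [hP, hA]; simp [Matrix.trace_fin_two]; ring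
  have hric : P * (A + P) + (A + P)ᵀ * P = 0 := by
    rw [hP, hA]
    ext i j
    fin_cases i <;> fin_cases j <;>
      simp [Matrix.mul_apply, Fin.sum_univ_two]
    · linear_combination 2 * e3
    · linear_combination e1
    · linear_combination e1
    · linear_combination 2 * e3 - 2 * e2
  refine ⟨hsym, htrace, ?_, by abel, by rw [Matrix.trace_add, htrace]; ring, hric⟩
  rw [← hric, Matrix.transpose_add, hsym.eq]
  noncomm_ring
end

section
/- For every real 2×2 matrix A there exists a symmetric real 2×2 matrix P with trace(P) = −trace(A) satisfying 2P² + AᵀP + PA = 0; equivalently, every linear vector field F(x) = A x on ℝ² admits a strictly orthogonal Helmholtz–Hodge decomposition. -/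
open Matrix

theorem stmt_10 (A : Matrix (Fin 2) (Fin 2) ℝ) :
    ∃ P : Matrix (Fin 2) (Fin 2) ℝ, P.IsSymm ∧ P.trace = -A.trace ∧
      2 * P ^ 2 + Aᵀ * P + P * A = 0 := by
  by_cases ht : A.trace = 0
  · exact ⟨0, by simp [Matrix.IsSymm], by simp [ht], by simp⟩
  obtain ⟨a, b, c, d, rfl⟩ : ∃ a b c d : ℝ, A = !![a, b; c, d] :=
    ⟨_, _, _, _, Matrix.eta_fin_two A⟩
  have ht' : a + d ≠ 0 := by simpa [Matrix.trace_fin_two] using ht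
  obtain ⟨m, hm⟩ : ∃ m : ℝ, b - c = m * (a + d) := ⟨(b - c) / (a + d), by field_simp⟩
  obtain rfl : b = c + m * (a + d) := by linarith
  have h1 : (1 + m ^ 2) ≠ 0 := by positivity
  refine ⟨!![-(a - m * c) / (1 + m ^ 2), -(c + m * a) / (1 + m ^ 2);
    -(c + m * a) / (1 + m ^ 2), -(d + m * (c + m * (a + d))) / (1 + m ^ 2)], ?_, ?_, ?_⟩
  · ext i j
    fin_cases i <;> fin_cases j <;> simp
  · simp only [Matrix.trace_fin_two, Matrix.of_apply, Matrix.cons_val', Matrix.cons_val_zero,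
      Matrix.cons_val_one, Matrix.cons_val_fin_one]
    field_simp
    ring
  · rw [two_mul, pow_two]
    ext i j
    fin_cases i <;> fin_cases j <;>
      simp [Matrix.mul_apply, Fin.sum_univ_two] <;> field_simp <;> ring
end

section
/- Let A = [[a, b], [c, d]] be a real 2×2 matrix with a + d ≠ 0 and b − c ≠ 0. Then the strictly orthogonal HHD of A is unique: if P₁ and P₂ are symmetric real 2×2 matrices with trace(P₁) = trace(P₂) = −trace(A) both satisfying 2Pᵢ² + AᵀPᵢ + PᵢA = 0 (i = 1, 2), then P₁ = P₂. -/
open Matrix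

lemma stmt_11_aux (a b c d : ℝ) (P : Matrix (Fin 2) (Fin 2) ℝ) (hP : P.IsSymm)
    (htr : P.trace = -(!![a, b; c, d] : Matrix (Fin 2) (Fin 2) ℝ).trace)
    (hric : 2 * P ^ 2 + (!![a, b; c, d])ᵀ * P + P * !![a, b; c, d] = 0) :
    P 1 0 = P 0 1 ∧ P 1 1 = -(a + d) - P 0 0 ∧
    (a + d) * P 0 0 + (b - c) * P 0 1 = -(a + d) * a ∧
    (b - c) * P 0 0 - (a + d) * P 0 1 = c * (a + d) := by
  have h10 : P 1 0 = P 0 1 := hP.apply 0 1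
  have h11 : P 1 1 = -(a + d) - P 0 0 := by
    simp [Matrix.trace, Fin.sum_univ_two] at htr
    linarith
  rw [two_mul, pow_two] at hric
  have e00 := congrFun (congrFun hric 0) 0
  have e01 := congrFun (congrFun hric 0) 1
  have e11 := congrFun (congrFun hric 1) 1
  simp [Matrix.mul_apply, Fin.sum_univ_two, h10, h11] at e00 e01 e11
  refine ⟨h10, h11, ?_, ?_⟩
  · linear_combination (e11 - e00) / 2
  · linear_combination e01

theorem stmt_11 (a b c d : ℝ) (htr : a + d ≠ 0) (hbc : b - c ≠ 0)
    (A : Matrix (Fin 2) (Fin 2) ℝ) (hA : A = !![a, b; c, d])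
    (P₁ P₂ : Matrix (Fin 2) (Fin 2) ℝ)
    (hP₁ : P₁.IsSymm) (hP₂ : P₂.IsSymm)
    (htr₁ : P₁.trace = -A.trace) (htr₂ : P₂.trace = -A.trace)
    (hric₁ : 2 * P₁ ^ 2 + Aᵀ * P₁ + P₁ * A = 0)
    (hric₂ : 2 * P₂ ^ 2 + Aᵀ * P₂ + P₂ * A = 0) :
    P₁ = P₂ := by
  subst hA
  obtain ⟨h1, h2, h3, h4⟩ := stmt_11_aux a b c d P₁ hP₁ htr₁ hric₁
  obtain ⟨k1, k2, k3, k4⟩ := stmt_11_aux a b c d P₂ hP₂ htr₂ hric₂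
  have hD : (a + d) ^ 2 + (b - c) ^ 2 ≠ 0 := by positivity
  have x : P₁ 0 0 = P₂ 0 0 := by
    apply mul_left_cancel₀ hD
    linear_combination (a + d) * (h3 - k3) + (b - c) * (h4 - k4)
  have y : P₁ 0 1 = P₂ 0 1 := by
    apply mul_left_cancel₀ hD
    linear_combination (b - c) * (h3 - k3) - (a + d) * (h4 - k4)
  ext i j
  fin_cases i <;> fin_cases j <;> simp [h1, h2, k1, k2, x, y]
end

section
/- Let D be a symmetric invertible real n×n matrix, and let F = −P + H be an HHD of a real n×n matrix F (P symmetric, trace(P) = −trace(F), trace(H) = 0). Then there exist a skew-symmetric matrix Q and a symmetric matrix U with P = D U and H = −Q U if and only if D commutes with P and there exists a skew-symmetric matrix Q satisfying Q P + H D = 0. -/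
open Matrix

theorem stmt_12 (n : ℕ) (D F P H : Matrix (Fin n) (Fin n) ℝ)
    (hD : D.IsSymm) (hDinv : IsUnit D)
    (hP : P.IsSymm) (hF : F = -P + H)
    (htrP : P.trace = -F.trace) (htrH : H.trace = 0) :
    (∃ Q U : Matrix (Fin n) (Fin n) ℝ,
        Qᵀ = -Q ∧ Uᵀ = U ∧ P = D * U ∧ H = -(Q * U)) ↔
    (D * P = P * D ∧ ∃ Q : Matrix (Fin n) (Fin n) ℝ, Qᵀ = -Q ∧ Q * P + H * D = 0) := by
  constructor
  · rintro ⟨Q, U, hQ, hU, hPU, hHU⟩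
    have hc : U * D = D * U := by
      have h : Pᵀ = P := hP
      have h' : Dᵀ = D := hD
      rw [hPU, transpose_mul, hU, h'] at h
      exact h
    refine ⟨?_, Q, hQ, ?_⟩
    · rw [hPU, mul_assoc D U D, hc]
    · rw [hPU, hHU, neg_mul, mul_assoc Q U D, hc, add_neg_cancel]
  · rintro ⟨hc, Q, hQ, hQP⟩
    have hdet : IsUnit D.det := (Matrix.isUnit_iff_isUnit_det D).1 hDinv
    have h1 : D * D⁻¹ = 1 := Matrix.mul_nonsing_inv D hdet
    have h2 : D⁻¹ * D = 1 := Matrix.nonsing_inv_mul D hdet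
    have hc' : D⁻¹ * P = P * D⁻¹ := by
      calc D⁻¹ * P = D⁻¹ * (P * D) * D⁻¹ := by
            rw [mul_assoc, mul_assoc, h1, mul_one]
        _ = P * D⁻¹ := by rw [← hc, ← mul_assoc, h2, one_mul]
    refine ⟨Q, D⁻¹ * P, hQ, ?_, ?_, ?_⟩
    · have h : Pᵀ = P := hP
      have h' : Dᵀ = D := hD
      rw [transpose_mul, transpose_nonsing_inv, h, h', hc']
    · rw [← mul_assoc, h1, one_mul]
    · have h3 : Q * P = -(H * D) := eq_neg_of_add_eq_zero_left hQP
      rw [hc', ← mul_assoc, h3, neg_mul, neg_neg, mul_assoc, h1, mul_one]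
end

section
/- Let P be a symmetric invertible real n×n matrix and H a real n×n matrix satisfying P H + Hᵀ P = 0. Then the matrix H P⁻¹ is skew-symmetric, i.e. (H P⁻¹)ᵀ = −H P⁻¹. Consequently, a strictly orthogonal HHD A = −P + H with invertible gradient part P can be written as an SDE decomposition A = −(I + Q)U with D = I, U = P symmetric, and Q = −H P⁻¹ skew-symmetric. -/
open Matrix

theorem stmt_13 (n : ℕ) (P H : Matrix (Fin n) (Fin n) ℝ)
    (hP : P.IsSymm) (hPinv : IsUnit P.det)
    (horth : P * H + Hᵀ * P = 0) :
    (H * P⁻¹)ᵀ = -(H * P⁻¹) ∧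
    -P + H = -((1 + -(H * P⁻¹)) * P) := by
  have h1 : Hᵀ * P = -(P * H) := by
    rw [eq_neg_iff_add_eq_zero, add_comm]; exact horth
  constructor
  · have h2 : Hᵀ = -(P * H) * P⁻¹ := by
      rw [← h1, Matrix.mul_assoc, Matrix.mul_nonsing_inv P hPinv, Matrix.mul_one]
    rw [Matrix.transpose_mul, Matrix.transpose_nonsing_inv, hP.eq, h2, Matrix.neg_mul,
      Matrix.mul_neg, Matrix.mul_assoc P H, ← Matrix.mul_assoc P⁻¹ P,
      Matrix.nonsing_inv_mul P hPinv, Matrix.one_mul]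
  · rw [Matrix.add_mul, Matrix.one_mul, Matrix.neg_mul, Matrix.mul_assoc,
      Matrix.nonsing_inv_mul P hPinv, Matrix.mul_one, neg_add, neg_neg]
end

section
/- Let p₁, q₁, r₁, p₂, q₂, r₂ be real constants and consider the planar quadratic vector field F(x, y) = (f(x, y), g(x, y)) with f(x, y) = p₁x² + q₁xy + r₁y² and g(x, y) = p₂x² + q₂xy + r₂y². If the coefficients satisfy q₁² − 2(p₂ − r₂)q₁ − 4p₂r₂ + q₂² + 2(p₁ − r₁)q₂ − 4p₁r₁ = 0, then F admits a strictly orthogonal Helmholtz–Hodge decomposition: there exist smooth functions V, H : ℝ² → ℝ such that f = −∂V/∂x + ∂H/∂y and g = −∂V/∂y − ∂H/∂x everywhere on ℝ², and ⟨∇V(x, y), (J∇H)(x, y)⟩ = (∂V/∂x)(∂H/∂y) − (∂V/∂y)(∂H/∂x) = 0 at every point (x, y) ∈ ℝ². -/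
lemma exists_dir (s t u v : ℝ) (h : s * v = t * u) :
    ∃ a b : ℝ, a ^ 2 + b ^ 2 ≠ 0 ∧ b * s = a * t ∧ b * u = a * v := by
  by_cases h1 : s ^ 2 + t ^ 2 = 0
  · have hs : s = 0 := by nlinarith [sq_nonneg s, sq_nonneg t]
    have ht : t = 0 := by nlinarith [sq_nonneg s, sq_nonneg t]
    by_cases h2 : u ^ 2 + v ^ 2 = 0
    · have hu : u = 0 := by nlinarith [sq_nonneg u, sq_nonneg v]
      have hv : v = 0 := by nlinarith [sq_nonneg u, sq_nonneg v]
      exact ⟨1, 0, by norm_num, by simp [ht], by simp [hv]⟩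
    · exact ⟨u, v, h2, by simp [hs, ht], by ring⟩
  · exact ⟨s, t, h1, by ring, by linarith⟩

lemma cubic_fderiv (A B C D c : ℝ) (p : ℝ × ℝ) :
    fderiv ℝ (fun p : ℝ × ℝ => c * (A / 3 * p.1 ^ 3 + B * (p.1 ^ 2 * p.2) + C * (p.1 * p.2 ^ 2)
      + D / 3 * p.2 ^ 3)) p (1, 0) = c * (A * p.1 ^ 2 + 2 * B * p.1 * p.2 + C * p.2 ^ 2) ∧
    fderiv ℝ (fun p : ℝ × ℝ => c * (A / 3 * p.1 ^ 3 + B * (p.1 ^ 2 * p.2) + C * (p.1 * p.2 ^ 2)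
      + D / 3 * p.2 ^ 3)) p (0, 1) = c * (B * p.1 ^ 2 + 2 * C * p.1 * p.2 + D * p.2 ^ 2) := by
  have h1 : HasFDerivAt (fun p : ℝ × ℝ => p.1) (ContinuousLinearMap.fst ℝ ℝ ℝ) p := hasFDerivAt_fst
  have h2 : HasFDerivAt (fun p : ℝ × ℝ => p.2) (ContinuousLinearMap.snd ℝ ℝ ℝ) p := hasFDerivAt_snd
  have h := (((((h1.pow 3).const_mul (A / 3)).add (((h1.pow 2).mul h2).const_mul B)).add
    ((h1.mul (h2.pow 2)).const_mul C)).add ((h2.pow 3).const_mul (D / 3))).const_mul c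
  have e := h.fderiv
  have e' : fderiv ℝ (fun p : ℝ × ℝ => c * (A / 3 * p.1 ^ 3 + B * (p.1 ^ 2 * p.2)
      + C * (p.1 * p.2 ^ 2) + D / 3 * p.2 ^ 3)) p = _ := e
  rw [e']
  constructor <;> simp <;> ring

theorem stmt_19 (p₁ q₁ r₁ p₂ q₂ r₂ : ℝ)
    (hcond : q₁ ^ 2 - 2 * (p₂ - r₂) * q₁ - 4 * p₂ * r₂
      + q₂ ^ 2 + 2 * (p₁ - r₁) * q₂ - 4 * p₁ * r₁ = 0) :
    ∃ V H : ℝ × ℝ → ℝ, ContDiff ℝ (⊤ : ℕ∞) V ∧ ContDiff ℝ (⊤ : ℕ∞) H ∧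
      ∀ p : ℝ × ℝ,
        (p₁ * p.1 ^ 2 + q₁ * p.1 * p.2 + r₁ * p.2 ^ 2
          = -fderiv ℝ V p (1, 0) + fderiv ℝ H p (0, 1)) ∧
        (p₂ * p.1 ^ 2 + q₂ * p.1 * p.2 + r₂ * p.2 ^ 2
          = -fderiv ℝ V p (0, 1) - fderiv ℝ H p (1, 0)) ∧
        (fderiv ℝ V p (1, 0) * fderiv ℝ H p (0, 1)
          - fderiv ℝ V p (0, 1) * fderiv ℝ H p (1, 0) = 0) := by
  obtain ⟨a, b, hn, h1, h2⟩ := exists_dir (2 * p₁ + q₂) (2 * p₂ - q₁) (q₁ + 2 * r₂) (q₂ - 2 * r₁)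
    (by linarith)
  obtain ⟨n, hnn⟩ : ∃ n, n * (a ^ 2 + b ^ 2) = 1 := ⟨_, inv_mul_cancel₀ hn⟩
  let W : ℝ → ℝ × ℝ → ℝ := fun c p => c * ((n * (-a * p₁ - b * p₂)) / 3 * p.1 ^ 3
    + (n * (b * p₁ - a * p₂)) * (p.1 ^ 2 * p.2) + (n * (-a * r₁ - b * r₂)) * (p.1 * p.2 ^ 2)
      + (n * (b * r₁ - a * r₂)) / 3 * p.2 ^ 3)
  refine ⟨W a, W b, by fun_prop, by fun_prop, fun p => ?_⟩
  have hx := fun c => (cubic_fderiv (n * (-a * p₁ - b * p₂)) (n * (b * p₁ - a * p₂))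
    (n * (-a * r₁ - b * r₂)) (n * (b * r₁ - a * r₂)) c p).1
  have hy := fun c => (cubic_fderiv (n * (-a * p₁ - b * p₂)) (n * (b * p₁ - a * p₂))
    (n * (-a * r₁ - b * r₂)) (n * (b * r₁ - a * r₂)) c p).2
  simp only [W, hx, hy]
  obtain ⟨x, y⟩ := p
  refine ⟨?_, ?_, by ring⟩
  · linear_combination (-(p₁ * x ^ 2 + q₁ * x * y + r₁ * y ^ 2)) * hnn
      + n * a * x * y * h1 + n * b * x * y * h2
  · linear_combination (-(p₂ * x ^ 2 + q₂ * x * y + r₂ * y ^ 2)) * hnn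
      + n * b * x * y * h1 - n * a * x * y * h2
end
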